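/- Let p : Fin C → ℝ be a probability vector (p_c ≥ 0 for all c and Σ_c p_c = 1) and y : Fin C a label, and let g : Fin C → ℝ be defined by g_c = p_c - (if c = y then 1 else 0). Then the Euclidean norm of g satisfies 1 - p_y ≤ ‖g‖₂ ≤ √2 · (1 - p_y). In particular ‖g‖₂ vanishes if and only if p_y = 1, and ‖g‖₂ is controlled above and below by the quantity 1 - p_y up to the absolute constant √2. -/

import Mathlib

open Real Finset

/-!
Write `q = 1 - p y`. The `y`-th coordinate of `g` is `-q`, and the remaining coordinates are the
nonnegative numbers `p c`, whose sum is `q`. Hence `‖g‖₂² = q² + ∑_{c ≠ y} p_c²`, where the last sum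
lies between `0` and `(∑_{c ≠ y} p_c)² = q²`. Taking square roots in `q² ≤ ‖g‖₂² ≤ 2 q²` gives both
bounds, and these force `‖g‖₂ = 0 ↔ q = 0`.
-/

/-- For a probability vector `p` and label `y`, the cross-entropy logit
gradient `g_c = p_c - 1{c = y}` satisfies
`1 - p_y ≤ ‖g‖₂ ≤ √2 * (1 - p_y)`, and `‖g‖₂ = 0 ↔ p_y = 1`. -/
theorem stmt1 {C : ℕ} (p : Fin C → ℝ) (hp : ∀ c, 0 ≤ p c) (hsum : ∑ c, p c = 1)
    (y : Fin C) (g : Fin C → ℝ)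
    (hg : ∀ c, g c = p c - (if c = y then (1 : ℝ) else 0)) :
    (1 - p y ≤ Real.sqrt (∑ c, (g c) ^ 2) ∧
      Real.sqrt (∑ c, (g c) ^ 2) ≤ Real.sqrt 2 * (1 - p y)) ∧
    (Real.sqrt (∑ c, (g c) ^ 2) = 0 ↔ p y = 1) := by
  have hrest : ∑ c ∈ univ.erase y, p c = 1 - p y := by
    have h := Finset.add_sum_erase univ p (mem_univ y)
    linarith
  have hq : 0 ≤ 1 - p y := hrest ▸ Finset.sum_nonneg fun c _ => hp c
  have hsq : ∑ c, (g c) ^ 2 = (1 - p y) ^ 2 + ∑ c ∈ univ.erase y, (p c) ^ 2 := by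
    rw [← Finset.add_sum_erase univ (fun c => (g c) ^ 2) (mem_univ y)]
    congr 1
    · simp only [hg, if_true]
      ring
    · refine Finset.sum_congr rfl fun c hc => ?_
      rw [hg, if_neg (Finset.ne_of_mem_erase hc), sub_zero]
  have hnonneg : 0 ≤ ∑ c ∈ univ.erase y, (p c) ^ 2 := Finset.sum_nonneg fun c _ => sq_nonneg _
  have hle : ∑ c ∈ univ.erase y, (p c) ^ 2 ≤ (1 - p y) ^ 2 := by
    rw [← hrest]
    exact Finset.sum_sq_le_sq_sum_of_nonneg fun c _ => hp c
  have hlower : 1 - p y ≤ Real.sqrt (∑ c, (g c) ^ 2) := by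
    apply Real.le_sqrt_of_sq_le
    linarith
  have hupper : Real.sqrt (∑ c, (g c) ^ 2) ≤ Real.sqrt 2 * (1 - p y) := by
    apply Real.sqrt_le_iff.mpr
    refine ⟨by positivity, ?_⟩
    rw [mul_pow, Real.sq_sqrt zero_le_two]
    linarith
  refine ⟨⟨hlower, hupper⟩, fun h => by linarith, fun h => ?_⟩
  rw [h, sub_self, mul_zero] at hupper
  exact le_antisymm hupper (Real.sqrt_nonneg _)
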